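/- Let n ≥ 3 and j ≥ 1 be integers, and let k be a positive integer such that n·k is even. Then (1, (n^j - 1)^{nk} - 1, (n^j - 1)^{nk}) is an abc triple. (In particular, for n = 2 replaced by the special case: for each integer j ≥ 2 and each positive integer k, (1, (2^j - 1)^{2k} - 1, (2^j - 1)^{2k}) is an abc triple.) -/

import Mathlib

open scoped Classical

/-- The radical of a natural number: the product of its distinct prime factors. -/
def rad (n : ℕ) : ℕ := ∏ p ∈ n.primeFactors, p

/-- The cosocle of a natural number: `n / rad n`. -/
def cosocle (n : ℕ) : ℕ := n / rad n

/-- `(a, b, c)` is an abc triple: `a, b, c` are relatively prime positive integers with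
`a + b = c` and `rad (a*b*c) < c`. -/
def IsABCTriple (a b c : ℕ) : Prop :=
  0 < a ∧ 0 < b ∧ 0 < c ∧ a + b = c ∧
    Nat.Coprime a b ∧ Nat.Coprime a c ∧ Nat.Coprime b c ∧ rad (a * b * c) < c

/-! Since `n ^ j - 1 ≡ -1` modulo `n ^ j`, raising to the `n`-th power gains a further factor `n`,
and an even exponent turns `-1` into `1`, so `n ^ (j + 1)` divides `c - 1` for
`c = (n ^ j - 1) ^ (n * k)`. Taking the radical of `c - 1` therefore loses a factor of at least
`n ^ j`, while `c` contributes to `rad ((c - 1) * c)` only a factor of at most `n ^ j - 1`. -/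

open UniqueFactorizationMonoid

theorem natCast_mul_dvd_pow_mul_sub_pow_mul {R : Type*} [CommRing R] {n : ℕ} {d x y : R}
    (hnd : (n : R) ∣ d) (hd : d ∣ x - y) (k : ℕ) :
    (n : R) * d ∣ x ^ (n * k) - y ^ (n * k) := by
  have h_pow : (n : R) * d ∣ x ^ n - y ^ n := by
    rw [← (Commute.all x y).geom_sum₂_mul]
    exact mul_dvd_mul (dvd_geom_sum₂_self (hnd.trans hd)) hd
  rw [pow_mul, pow_mul]
  exact h_pow.trans (sub_dvd_pow_sub_pow _ _ k)

theorem mul_succ_dvd_pow_sub_one_of_even {n m k : ℕ} (hm : 0 < m) (hnm : n ∣ m + 1)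
    (heven : Even (n * k)) : n * (m + 1) ∣ m ^ (n * k) - 1 := by
  have h_int : (n : ℤ) * (m + 1) ∣ (m : ℤ) ^ (n * k) - (-1) ^ (n * k) :=
    natCast_mul_dvd_pow_mul_sub_pow_mul (mod_cast hnm) (by rw [sub_neg_eq_add]) k
  rw [heven.neg_one_pow] at h_int
  zify [Nat.one_le_pow (n * k) m hm]
  exact h_int

theorem pow_mul_radical_dvd_of_pow_succ_dvd {M : Type*} [CommMonoidWithZero M]
    [NormalizationMonoid M] [UniqueFactorizationMonoid M] {a b : M} {j : ℕ}
    (h : a ^ (j + 1) ∣ b) : a ^ j * radical b ∣ b := by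
  obtain ⟨t, rfl⟩ := h
  have h_radical : radical (a ^ (j + 1) * t) ∣ a * t :=
    radical_mul_dvd.trans
      (mul_dvd_mul (radical_pow_dvd.trans radical_dvd_self) radical_dvd_self)
  calc a ^ j * radical (a ^ (j + 1) * t) ∣ a ^ j * (a * t) := mul_dvd_mul_left _ h_radical
    _ = a ^ (j + 1) * t := by rw [pow_succ, mul_assoc]

theorem rad_eq_radical (n : ℕ) : rad n = radical n :=
  Nat.radical_eq_prod_primeFactors.symm

theorem isABCTriple_one_of_rad_lt {c : ℕ} (hc : 1 < c) (hrad : rad ((c - 1) * c) < c) :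
    IsABCTriple 1 (c - 1) c := by
  have h_coprime : Nat.Coprime (c - 1) c :=
    (Nat.coprime_self_sub_left hc.le).2 (Nat.coprime_one_left c)
  refine ⟨one_pos, Nat.sub_pos_of_lt hc, one_pos.trans hc, Nat.add_sub_of_le hc.le,
    Nat.coprime_one_left _, Nat.coprime_one_left _, h_coprime, ?_⟩
  rwa [one_mul]

theorem isABCTriple_of_pow_succ_dvd_pow_sub_one {m e n j : ℕ} (hm : 1 < m) (he : e ≠ 0)
    (hmn : m ≤ n ^ j) (hdvd : n ^ (j + 1) ∣ m ^ e - 1) : IsABCTriple 1 (m ^ e - 1) (m ^ e) := by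
  have hc : 1 < m ^ e := Nat.one_lt_pow he hm
  have hc_pred : 0 < m ^ e - 1 := Nat.sub_pos_of_lt hc
  have h_radical_dvd : radical ((m ^ e - 1) * m ^ e) ∣ radical (m ^ e - 1) * m :=
    radical_mul_dvd.trans (mul_dvd_mul_left _ (radical_pow_dvd.trans radical_dvd_self))
  have h_pos : 0 < radical (m ^ e - 1) * m := Nat.mul_pos (Nat.radical_pos _) (by omega)
  refine isABCTriple_one_of_rad_lt hc ?_
  calc rad ((m ^ e - 1) * m ^ e)
      = radical ((m ^ e - 1) * m ^ e) := rad_eq_radical _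
    _ ≤ radical (m ^ e - 1) * m := Nat.le_of_dvd h_pos h_radical_dvd
    _ ≤ radical (m ^ e - 1) * n ^ j := Nat.mul_le_mul_left _ hmn
    _ = n ^ j * radical (m ^ e - 1) := mul_comm _ _
    _ ≤ m ^ e - 1 := Nat.le_of_dvd hc_pred (pow_mul_radical_dvd_of_pow_succ_dvd hdvd)
    _ < m ^ e := Nat.sub_one_lt_of_lt hc

theorem isABCTriple_pow_sub_one_pow_mul {n j k : ℕ} (hnj : 2 < n ^ j) (hk : k ≠ 0)
    (heven : Even (n * k)) :
    IsABCTriple 1 ((n ^ j - 1) ^ (n * k) - 1) ((n ^ j - 1) ^ (n * k)) := by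
  have hj : j ≠ 0 := by rintro rfl; simp at hnj
  have hn : n ≠ 0 := by rintro rfl; simp [hj] at hnj
  have h_succ : n ^ j - 1 + 1 = n ^ j := Nat.sub_add_cancel (by omega)
  have hdvd : n * (n ^ j - 1 + 1) ∣ (n ^ j - 1) ^ (n * k) - 1 :=
    mul_succ_dvd_pow_sub_one_of_even (by omega) (h_succ ▸ dvd_pow_self n hj) heven
  rw [h_succ, ← pow_succ'] at hdvd
  exact isABCTriple_of_pow_succ_dvd_pow_sub_one (by omega) (mul_ne_zero hn hk)
    (Nat.sub_le _ _) hdvd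

theorem stmt_18 (n j : ℕ) (hn : 3 ≤ n) (hj : 1 ≤ j) (k : ℕ) (hk : 0 < k)
    (heven : Even (n * k)) :
    IsABCTriple 1 ((n ^ j - 1) ^ (n * k) - 1) ((n ^ j - 1) ^ (n * k)) ∧
    (∀ j' k' : ℕ, 2 ≤ j' → 0 < k' →
      IsABCTriple 1 ((2 ^ j' - 1) ^ (2 * k') - 1) ((2 ^ j' - 1) ^ (2 * k'))) := by
  refine ⟨isABCTriple_pow_sub_one_pow_mul ?_ hk.ne' heven, fun j' k' hj' hk' =>
    isABCTriple_pow_sub_one_pow_mul ?_ hk'.ne' (even_two_mul k')⟩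
  · calc 2 < n := hn
      _ ≤ n ^ j := Nat.le_self_pow (Nat.one_le_iff_ne_zero.1 hj) n
  · calc 2 < 2 ^ 2 := by norm_num
      _ ≤ 2 ^ j' := Nat.pow_le_pow_right two_pos hj'
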